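/- Let R be a noetherian ring which is a finitely generated module over a central subring C, and suppose R is a maximal Cohen-Macaulay C-module (i.e. C-Macaulay). If C is equicodimensional, then R is equicodimensional, i.e. every maximal ideal of R has height equal to Kdim(R). -/

import Mathlib

/-- A two-sided ideal of a (possibly noncommutative) ring is prime. -/
def IsPrimeTS {R : Type*} [Ring R] (P : TwoSidedIdeal R) : Prop :=
  P ≠ ⊤ ∧ ∀ a b : R, (∀ r : R, a * r * b ∈ P) → a ∈ P ∨ b ∈ P

/-- Height of an element `P` in a poset with respect to a predicate (`prime`):
the supremum of lengths of strictly increasing chains of elements satisfying the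
predicate and ending at `P`. -/
noncomputable def primeChainHeight {α : Type*} [Preorder α] (isP : α → Prop) (P : α) : ℕ∞ :=
  sSup {n : ℕ∞ | ∃ m : ℕ, n = (m : ℕ∞) ∧ ∃ f : Fin (m + 1) → α,
    StrictMono f ∧ (∀ i, isP (f i)) ∧ f (Fin.last m) = P}

/-- Height (codimension) of a two-sided ideal: the supremum of lengths of chains of
prime two-sided ideals descending from it. -/
noncomputable def tsHeight {R : Type*} [Ring R] (P : TwoSidedIdeal R) : ℕ∞ :=
  primeChainHeight IsPrimeTS P

/-- Height of an ideal of a commutative ring. -/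
noncomputable def cHeight {C : Type*} [CommRing C] (p : Ideal C) : ℕ∞ :=
  primeChainHeight Ideal.IsPrime p

/-- Contraction `P ∩ C` of a two-sided ideal of `R` to the central subring `C`
(given via the algebra structure map, whose image is central). -/
def contractTS {C R : Type*} [CommRing C] [Ring R] [Algebra C R]
    (P : TwoSidedIdeal R) : Ideal C :=
  Ideal.comap (algebraMap C R) (TwoSidedIdeal.asIdeal P)

/-- A two-sided ideal is maximal. -/
def IsMaximalTS {R : Type*} [Ring R] (M : TwoSidedIdeal R) : Prop :=
  M ≠ ⊤ ∧ ∀ J : TwoSidedIdeal R, M < J → J = ⊤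

/-- Krull dimension of a (possibly noncommutative) ring: the supremum of the
heights of its prime two-sided ideals. -/
noncomputable def tsKdim (R : Type*) [Ring R] : ℕ∞ :=
  ⨆ P : {P : TwoSidedIdeal R // IsPrimeTS P}, tsHeight P.1

/-- Krull dimension of a commutative ring: the supremum of heights of primes. -/
noncomputable def cKdim (C : Type*) [CommRing C] : ℕ∞ :=
  ⨆ p : {p : Ideal C // p.IsPrime}, cHeight p.1

/-- The grade `G_C(I, M)`: the supremum of the lengths of `M`-regular sequences
consisting of elements of the ideal `I`. -/
noncomputable def cGrade {C : Type*} [CommRing C] (I : Ideal C) (M : Type*)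
    [AddCommGroup M] [Module C M] : ℕ∞ :=
  sSup {n : ℕ∞ | ∃ rs : List C, n = rs.length ∧ (∀ x ∈ rs, x ∈ I) ∧
    RingTheory.Sequence.IsRegular M rs}

/-- `M` is a maximal Cohen-Macaulay `C`-module: for every maximal ideal `m` of `C`,
the `m`-grade of `M` equals the height of `m` (that is, `Kdim (C_m)`). -/
def IsMaximalCohenMacaulay (C : Type*) [CommRing C] (M : Type*)
    [AddCommGroup M] [Module C M] : Prop :=
  ∀ m : Ideal C, m.IsMaximal → cGrade m M = cHeight m

open scoped nonZeroDivisors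

lemma aux_jac {A : Type*} [Ring A] [IsArtinianRing A]
    (hA : ∀ a b : A, (∀ r, a * r * b = 0) → a = 0 ∨ b = 0) : IsSemisimpleRing A := by
  rw [IsArtinianRing.isSemisimpleRing_iff_jacobson]
  obtain ⟨n, hn⟩ := IsSemiprimaryRing.isNilpotent (R := A)
  set I := Ring.jacobson A
  have key : ∀ K : Ideal A, K * I = ⊥ → I = ⊥ ∨ K = ⊥ := by
    intro K h
    by_contra! hc
    obtain ⟨a, ha, ha0⟩ := Submodule.exists_mem_ne_zero_of_ne_bot hc.1
    obtain ⟨b, hb, hb0⟩ := Submodule.exists_mem_ne_zero_of_ne_bot hc.2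
    rcases hA b a (fun r => by
      have : b * (r * a) ∈ K * I := Ideal.mul_mem_mul hb (I.mul_mem_left r ha)
      rw [h] at this
      rw [mul_assoc]; simpa using this) with h | h
    · exact hb0 h
    · exact ha0 h
  induction n with
  | zero =>
    have h1 : (1 : A) ∈ (⊤ : Ideal A) := trivial
    rw [Submodule.pow_zero, Ideal.one_eq_top] at hn
    rw [eq_bot_iff, ← Ideal.zero_eq_bot, ← hn]; exact le_top
  | succ n ih =>
    rw [Submodule.pow_succ] at hn
    rcases key _ hn with h | h
    · exact h
    · exact ih h

lemma aux_simple {A : Type*} [Ring A] [IsArtinianRing A]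
    (hA : ∀ a b : A, (∀ r, a * r * b = 0) → a = 0 ∨ b = 0) (J : TwoSidedIdeal A)
    (a : A) (ha : a ∈ J) (ha0 : a ≠ 0) : (1 : A) ∈ J := by
  have := aux_jac hA
  obtain ⟨L, hL⟩ := exists_isCompl (TwoSidedIdeal.asIdeal J)
  have h1 : (1 : A) ∈ TwoSidedIdeal.asIdeal J ⊔ L := by rw [hL.sup_eq_top]; trivial
  obtain ⟨e, he, f, hf, hef⟩ := Submodule.mem_sup.1 h1
  rw [TwoSidedIdeal.mem_asIdeal] at he
  have hf0 : f = 0 := by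
    refine (hA a f fun r => ?_).resolve_left ha0
    have h2 : a * r * f ∈ TwoSidedIdeal.asIdeal J ⊓ L :=
      ⟨TwoSidedIdeal.mem_asIdeal.2 (J.mul_mem_right _ _ (J.mul_mem_right _ _ ha)),
        L.mul_mem_left _ hf⟩
    rw [hL.inf_eq_bot] at h2
    simpa using h2
  rw [← hef, hf0, add_zero]; exact he

lemma aux_meet {D A : Type*} [CommRing D] [IsDomain D] [Ring A] [Algebra D A] [Module.Finite D A]
    (htf : ∀ (d : D) (a : A), d • a = 0 → d = 0 ∨ a = 0)
    (hA : ∀ a b : A, (∀ r, a * r * b = 0) → a = 0 ∨ b = 0) (J : TwoSidedIdeal A)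
    (a : A) (ha : a ∈ J) (ha0 : a ≠ 0) : ∃ d : D, d ≠ 0 ∧ algebraMap D A d ∈ J := by
  have hart : IsArtinian (FractionRing D) (LocalizedModule D⁰ A) := inferInstance
  have htower : IsScalarTower (FractionRing D) (LocalizedModule D⁰ A) (LocalizedModule D⁰ A) := by
    refine ⟨fun x y z => ?_⟩
    rw [smul_eq_mul, smul_eq_mul]
    obtain ⟨⟨a, s⟩, hs⟩ := IsLocalization.surj D⁰ x
    have hs' : (s : D) • x = algebraMap D (FractionRing D) a := by
      rw [Algebra.smul_def, mul_comm]; exact hs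
    have h1 : ∀ w : LocalizedModule D⁰ A, (s : D) • (x • w) = a • w := by
      intro w
      rw [← smul_assoc, hs', algebraMap_smul]
    rw [← sub_eq_zero]
    refine LocalizedModule.eq_zero_of_smul_eq_zero (s : D) s.2 _ ?_
    rw [smul_sub, h1, ← smul_mul_assoc, h1, smul_mul_assoc, sub_self]
  have hart' : IsArtinianRing (LocalizedModule D⁰ A) := isArtinian_of_tower (FractionRing D) hart
  have mk0 : ∀ (x : A) (s : D⁰), LocalizedModule.mk x s = 0 ↔ x = 0 := by
    intro x s
    rw [← LocalizedModule.zero_mk (1 : D⁰), LocalizedModule.mk_eq]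
    constructor
    · rintro ⟨u, hu⟩
      simp only [one_smul, smul_zero] at hu
      exact (htf _ _ hu).resolve_left (nonZeroDivisors.ne_zero u.2)
    · rintro rfl; exact ⟨1, by simp⟩
  have hsm : ∀ (d : D) (x : A), x ∈ J → d • x ∈ J := by
    intro d x hx; rw [Algebra.smul_def]; exact J.mul_mem_left _ _ hx
  let J' : TwoSidedIdeal (LocalizedModule D⁰ A) := TwoSidedIdeal.mk'
    {y | ∃ x ∈ J, ∃ s : D⁰, y = LocalizedModule.mk x s}
    ⟨0, J.zero_mem, 1, (LocalizedModule.zero_mk _).symm⟩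
    (by
      rintro _ _ ⟨x, hx, s, rfl⟩ ⟨y, hy, t, rfl⟩
      rw [LocalizedModule.mk_add_mk]
      exact ⟨_, J.add_mem (hsm _ _ hx) (hsm _ _ hy), _, rfl⟩)
    (by
      rintro _ ⟨x, hx, s, rfl⟩
      exact ⟨-x, J.neg_mem hx, s, LocalizedModule.mk_neg.symm⟩)
    (by
      rintro z _ ⟨x, hx, s, rfl⟩
      induction z with | _ z t
      rw [LocalizedModule.mk_mul_mk]
      exact ⟨_, J.mul_mem_left _ _ hx, _, rfl⟩)
    (by
      rintro _ z ⟨x, hx, s, rfl⟩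
      induction z with | _ z t
      rw [LocalizedModule.mk_mul_mk]
      exact ⟨_, J.mul_mem_right _ _ hx, _, rfl⟩)
  have h1 : (1 : LocalizedModule D⁰ A) ∈ J' := by
    refine aux_simple ?_ J' (LocalizedModule.mk a 1) ?_ ?_
    · intro x y h
      induction x with | _ x s
      induction y with | _ y t
      rw [mk0, mk0]
      refine hA x y fun r => ?_
      have := h (LocalizedModule.mk r 1)
      rwa [LocalizedModule.mk_mul_mk, LocalizedModule.mk_mul_mk, mk0] at this
    · exact (TwoSidedIdeal.mem_mk' _ _ _ _ _ _ _).2 ⟨a, ha, 1, rfl⟩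
    · rwa [Ne, mk0]
  obtain ⟨x, hx, s, h⟩ := (TwoSidedIdeal.mem_mk' _ _ _ _ _ _ _).1 h1
  have h2 : (LocalizedModule.mk (1 : A) (1 : D⁰)) = LocalizedModule.mk x s := by
    rw [← h, OreLocalization.one_def]
  rw [LocalizedModule.mk_eq] at h2
  obtain ⟨u, hu⟩ := h2
  refine ⟨(u * s : D⁰), nonZeroDivisors.ne_zero (u * s).2, ?_⟩
  have h3 : algebraMap D A (u * s : D⁰) = (u : D) • ((1 : D⁰) : D) • x := by
    rw [Algebra.algebraMap_eq_smul_one, Submonoid.coe_mul, mul_smul]; exact hu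
  rw [h3]
  exact hsm _ _ (hsm _ _ hx)

lemma mem_contractTS {C R : Type*} [CommRing C] [Ring R] [Algebra C R]
    {P : TwoSidedIdeal R} {c : C} : c ∈ contractTS (C := C) P ↔ algebraMap C R c ∈ P := by
  simp [contractTS, Ideal.mem_comap]

lemma ts_ne_top {R : Type*} [Ring R] {P : TwoSidedIdeal R} : P ≠ ⊤ ↔ (1 : R) ∉ P := by
  rw [Ne, ← TwoSidedIdeal.one_mem_iff]

lemma central_mem {C R : Type*} [CommRing C] [Ring R] [Algebra C R]
    {P : TwoSidedIdeal R} (hP : IsPrimeTS P) {c : C} {a : R} (h : algebraMap C R c * a ∈ P) :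
    algebraMap C R c ∈ P ∨ a ∈ P := by
  refine hP.2 _ _ fun r => ?_
  rw [Algebra.commutes, mul_assoc]
  exact P.mul_mem_left _ _ h

lemma contract_prime {C R : Type*} [CommRing C] [Ring R] [Algebra C R]
    {P : TwoSidedIdeal R} (hP : IsPrimeTS P) : (contractTS (C := C) P).IsPrime := by
  constructor
  · rw [Ideal.ne_top_iff_one, mem_contractTS, map_one]
    exact ts_ne_top.1 hP.1
  · intro x y h
    simp only [mem_contractTS, map_mul] at *
    exact central_mem hP h

lemma incomp {C R : Type*} [CommRing C] [Ring R] [Algebra C R] [Module.Finite C R]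
    {P Q : TwoSidedIdeal R} (hP : IsPrimeTS P) (h : P < Q) :
    contractTS (C := C) P < contractTS Q := by
  obtain ⟨hle, a, haQ, haP⟩ := SetLike.lt_iff_le_and_exists.1 h
  rw [SetLike.lt_iff_le_and_exists]
  refine ⟨fun c hc => mem_contractTS.2 (hle (mem_contractTS.1 hc)), ?_⟩
  set p := contractTS (C := C) P with hp
  have : p.IsPrime := contract_prime hP
  let π : R →+* R ⧸ TwoSidedIdeal.asIdeal P := Ideal.Quotient.mk _
  have hπ : ∀ x, π x = 0 ↔ x ∈ P := fun x => by
    rw [Ideal.Quotient.eq_zero_iff_mem, TwoSidedIdeal.mem_asIdeal]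
  have hπs : Function.Surjective π := Ideal.Quotient.mk_surjective
  let g : C ⧸ p →+* R ⧸ TwoSidedIdeal.asIdeal P :=
    Ideal.Quotient.lift p (π.comp (algebraMap C R)) (fun c hc => by
      simpa [hπ] using mem_contractTS.1 hc)
  have hg : ∀ c, g (Ideal.Quotient.mk p c) = π (algebraMap C R c) := fun c => rfl
  letI : Algebra (C ⧸ p) (R ⧸ TwoSidedIdeal.asIdeal P) := g.toAlgebra' (by
    intro c x
    obtain ⟨c, rfl⟩ := Ideal.Quotient.mk_surjective c
    obtain ⟨x, rfl⟩ := hπs x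
    rw [hg, ← map_mul, ← map_mul, Algebra.commutes])
  have hsm : ∀ (c : C) (x : R), (Ideal.Quotient.mk p c) • (π x) = π (c • x) := by
    intro c x
    rw [Algebra.smul_def, Algebra.smul_def, map_mul]; rfl
  let f : R →ₛₗ[Ideal.Quotient.mk p] (R ⧸ TwoSidedIdeal.asIdeal P) :=
    { toFun := π, map_add' := map_add π, map_smul' := fun c x => (hsm c x).symm }
  have : RingHomSurjective (Ideal.Quotient.mk p) := ⟨Ideal.Quotient.mk_surjective⟩
  have : Module.Finite (C ⧸ p) (R ⧸ TwoSidedIdeal.asIdeal P) :=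
    Module.Finite.of_surjective f hπs
  let J : TwoSidedIdeal (R ⧸ TwoSidedIdeal.asIdeal P) := TwoSidedIdeal.mk'
    {y | ∃ x ∈ Q, y = π x}
    ⟨0, Q.zero_mem, (map_zero π).symm⟩
    (by
      rintro _ _ ⟨x, hx, rfl⟩ ⟨y, hy, rfl⟩
      exact ⟨_, Q.add_mem hx hy, (map_add π _ _).symm⟩)
    (by
      rintro _ ⟨x, hx, rfl⟩
      exact ⟨-x, Q.neg_mem hx, (map_neg π _).symm⟩)
    (by
      rintro z _ ⟨x, hx, rfl⟩
      obtain ⟨z, rfl⟩ := hπs z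
      exact ⟨_, Q.mul_mem_left z _ hx, (map_mul π _ _).symm⟩)
    (by
      rintro _ z ⟨x, hx, rfl⟩
      obtain ⟨z, rfl⟩ := hπs z
      exact ⟨_, Q.mul_mem_right _ z hx, (map_mul π _ _).symm⟩)
  obtain ⟨d, hd0, hd⟩ := aux_meet (D := C ⧸ p) (by
      intro d x h
      obtain ⟨d, rfl⟩ := Ideal.Quotient.mk_surjective d
      obtain ⟨x, rfl⟩ := hπs x
      rw [hsm, hπ, Algebra.smul_def] at h
      rw [hπ, Ideal.Quotient.eq_zero_iff_mem, hp, mem_contractTS]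
      exact central_mem hP h) (by
      intro x y h
      obtain ⟨x, rfl⟩ := hπs x
      obtain ⟨y, rfl⟩ := hπs y
      rw [hπ, hπ]
      refine hP.2 x y fun r => ?_
      rw [← hπ, map_mul, map_mul]
      exact h _) J (π a) ((TwoSidedIdeal.mem_mk' _ _ _ _ _ _ _).2 ⟨a, haQ, rfl⟩)
      (by rwa [Ne, hπ])
  obtain ⟨x, hx, hdx⟩ := (TwoSidedIdeal.mem_mk' _ _ _ _ _ _ _).1 hd
  obtain ⟨c, rfl⟩ := Ideal.Quotient.mk_surjective d
  refine ⟨c, ?_, fun hc => hd0 (Ideal.Quotient.eq_zero_iff_mem.2 hc)⟩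
  have hdx' : π (algebraMap C R c) = π x := hdx
  rw [← sub_eq_zero, ← map_sub, hπ] at hdx'
  rw [mem_contractTS]
  simpa using Q.add_mem (hle hdx') hx

lemma height_le {C R : Type*} [CommRing C] [Ring R] [Algebra C R] [Module.Finite C R]
    (P : TwoSidedIdeal R) : tsHeight P ≤ cHeight (contractTS (C := C) P) := by
  refine sSup_le ?_
  rintro _ ⟨m, rfl, f, hf, hfp, hl⟩
  refine le_sSup ⟨m, rfl, fun i => contractTS (f i), ?_, fun i => contract_prime (hfp i), ?_⟩
  · intro i j hij
    exact incomp (hfp i) (hf hij)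
  · simp only [hl]

lemma maximal_prime {R : Type*} [Ring R] {M : TwoSidedIdeal R} (hM : IsMaximalTS M) :
    IsPrimeTS M := by
  refine ⟨hM.1, fun a b h => ?_⟩
  by_contra! hc
  let J : TwoSidedIdeal R := TwoSidedIdeal.mk' {x | ∀ r, x * r * b ∈ M}
    (by intro r; simpa using M.zero_mem)
    (by intro x y hx hy r; rw [add_mul, add_mul]; exact M.add_mem (hx r) (hy r))
    (by intro x hx r; rw [neg_mul, neg_mul]; exact M.neg_mem (hx r))
    (by
      intro x y hy r
      rw [mul_assoc x, mul_assoc x]; exact M.mul_mem_left _ _ (hy r))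
    (by intro x y hx r; rw [mul_assoc x]; exact hx (y * r))
  have hJ : ∀ x, x ∈ J ↔ ∀ r, x * r * b ∈ M := TwoSidedIdeal.mem_mk' _ _ _ _ _ _
  have hlt : M < J := by
    rw [SetLike.lt_iff_le_and_exists]
    exact ⟨fun x hx => (hJ x).2 fun r => M.mul_mem_right _ _ (M.mul_mem_right _ _ hx),
      a, (hJ a).2 h, hc.1⟩
  have h1 : (1 : R) ∈ J := by rw [hM.2 J hlt]; trivial
  exact hc.2 (by simpa using (hJ 1).1 h1 1)

lemma contract_maximal {C R : Type*} [CommRing C] [Ring R] [Algebra C R] [Module.Finite C R]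
    {M : TwoSidedIdeal R} (hM : IsMaximalTS M) : (contractTS (C := C) M).IsMaximal := by
  have hpr := maximal_prime hM
  rw [Ideal.isMaximal_iff]
  refine ⟨by rw [mem_contractTS, map_one]; exact ts_ne_top.1 hM.1, ?_⟩
  intro K c hK hc hcK
  rw [mem_contractTS] at hc
  let J : TwoSidedIdeal R := TwoSidedIdeal.mk' {x | ∃ y ∈ M, ∃ z : R, x = y + c • z}
    ⟨0, M.zero_mem, 0, by simp⟩
    (by
      rintro _ _ ⟨y, hy, z, rfl⟩ ⟨y', hy', z', rfl⟩
      exact ⟨_, M.add_mem hy hy', z + z', by rw [smul_add]; abel⟩)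
    (by
      rintro _ ⟨y, hy, z, rfl⟩
      exact ⟨_, M.neg_mem hy, -z, by rw [smul_neg]; abel⟩)
    (by
      rintro x _ ⟨y, hy, z, rfl⟩
      exact ⟨_, M.mul_mem_left x _ hy, x * z, by rw [mul_add, mul_smul_comm]⟩)
    (by
      rintro _ x ⟨y, hy, z, rfl⟩
      exact ⟨_, M.mul_mem_right _ x hy, z * x, by rw [add_mul, smul_mul_assoc]⟩)
  have hJ : ∀ x, x ∈ J ↔ ∃ y ∈ M, ∃ z : R, x = y + c • z := TwoSidedIdeal.mem_mk' _ _ _ _ _ _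
  have hlt : M < J := by
    rw [SetLike.lt_iff_le_and_exists]
    exact ⟨fun x hx => (hJ x).2 ⟨x, hx, 0, by simp⟩, _,
      (hJ _).2 ⟨0, M.zero_mem, 1, by rw [zero_add, Algebra.algebraMap_eq_smul_one]⟩, hc⟩
  have hJt := hM.2 J hlt
  let N : Submodule C R :=
    { carrier := M
      add_mem' := M.add_mem
      zero_mem' := M.zero_mem
      smul_mem' := fun d x hx => by
        rw [Algebra.smul_def]; exact M.mul_mem_left _ _ hx }
  obtain ⟨r, hr, hrN⟩ := Submodule.exists_sub_one_mem_and_smul_le_of_fg_of_le_sup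
    (I := Ideal.span {c}) (N := N) (N' := (⊤ : Submodule C R)) (P := ⊤)
    Module.Finite.fg_top le_rfl (by
      intro x _
      have hx : x ∈ J := by rw [hJt]; trivial
      obtain ⟨y, hy, z, rfl⟩ := (hJ x).1 hx
      exact Submodule.add_mem_sup hy
        (Submodule.smul_mem_smul (Ideal.mem_span_singleton_self c) trivial))
  have h1 : r • (1 : R) ∈ N := hrN (Submodule.smul_mem_pointwise_smul _ _ _ trivial)
  have hrM : r ∈ contractTS M := by
    rw [mem_contractTS, Algebra.algebraMap_eq_smul_one]; exact h1
  have h2 : r - 1 ∈ K := (Ideal.span_singleton_le_iff_mem K).2 hcK hr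
  simpa using K.sub_mem (hK hrM) h2

lemma exists_below {C R : Type*} [CommRing C] [Ring R] [Algebra C R]
    {I P : TwoSidedIdeal R} (hP : IsPrimeTS P) (hIP : I ≤ P) (c : C)
    (hc : algebraMap C R c ∈ P) (hreg : ∀ r : R, c • r ∈ I → r ∈ I) :
    ∃ Q : TwoSidedIdeal R, IsPrimeTS Q ∧ I ≤ Q ∧ Q < P := by
  let T : Set (TwoSidedIdeal R) := {Q | ∀ (n : ℕ) (t : R), c ^ n • t ∈ Q → t ∈ P}
  have hI : I ∈ T := by
    intro n t h
    refine hIP ?_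
    induction n with
    | zero => simpa using h
    | succ n ih => rw [pow_succ', mul_smul] at h; exact ih (hreg _ h)
  obtain ⟨Q, hIQ, hQ⟩ := zorn_le_nonempty₀ T (by
    intro ch hch hchain y hy
    let U : TwoSidedIdeal R := TwoSidedIdeal.mk' {x | ∃ K ∈ ch, x ∈ K}
      ⟨y, hy, y.zero_mem⟩
      (by
        rintro a b ⟨K, hK, ha⟩ ⟨L, hL, hb⟩
        rcases hchain.total hK hL with h | h
        · exact ⟨L, hL, L.add_mem (h ha) hb⟩
        · exact ⟨K, hK, K.add_mem ha (h hb)⟩)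
      (by rintro a ⟨K, hK, ha⟩; exact ⟨K, hK, K.neg_mem ha⟩)
      (by rintro a b ⟨K, hK, ha⟩; exact ⟨K, hK, K.mul_mem_left _ _ ha⟩)
      (by rintro a b ⟨K, hK, ha⟩; exact ⟨K, hK, K.mul_mem_right _ _ ha⟩)
    have hU : ∀ x, x ∈ U ↔ ∃ K ∈ ch, x ∈ K := TwoSidedIdeal.mem_mk' _ _ _ _ _ _
    refine ⟨U, ?_, fun K hK x hx => (hU x).2 ⟨K, hK, hx⟩⟩
    intro n t h
    obtain ⟨K, hK, h⟩ := (hU _).1 h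
    exact hch hK n t h) I hI
  have hQT : Q ∈ T := hQ.prop
  have hQP : Q ≤ P := fun x hx => hQT 0 x (by simpa using hx)
  have hcQ : algebraMap C R c ∉ Q := by
    intro h
    refine ts_ne_top.1 hP.1 (hQT 1 1 ?_)
    rwa [pow_one, ← Algebra.algebraMap_eq_smul_one]
  refine ⟨Q, ⟨ts_ne_top.2 fun h => ts_ne_top.1 hP.1 (hQP h), ?_⟩, hIQ,
    SetLike.lt_iff_le_and_exists.2 ⟨hQP, _, hc, hcQ⟩⟩
  intro a b hab
  by_contra! hcon
  have key : ∀ a : R, a ∉ Q → ∃ (n : ℕ) (t : R), t ∉ P ∧ c ^ n • t ∈ Q ⊔ TwoSidedIdeal.span {a} := by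
    intro a ha
    by_contra! hk
    have hmem : Q ⊔ TwoSidedIdeal.span {a} ∈ T := fun n t h => by
      by_contra ht; exact hk n t ht h
    have := hQ.le_of_ge hmem le_sup_left
    exact ha (this ((le_sup_right : TwoSidedIdeal.span {a} ≤ _)
      (TwoSidedIdeal.subset_span (Set.mem_singleton a))))
  obtain ⟨n, t, ht, hnt⟩ := key a hcon.1
  obtain ⟨k, u, hu, hku⟩ := key b hcon.2
  -- right side
  have hb1 : ∀ y ∈ Q ⊔ TwoSidedIdeal.span {b}, ∀ r, a * r * y ∈ Q := by
    let B : TwoSidedIdeal R := TwoSidedIdeal.mk' {y | ∀ r, a * r * y ∈ Q}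
      (by intro r; simpa using Q.zero_mem)
      (by intro x y hx hy r; rw [mul_add]; exact Q.add_mem (hx r) (hy r))
      (by intro x hx r; rw [mul_neg]; exact Q.neg_mem (hx r))
      (by intro x y hy r; rw [← mul_assoc, mul_assoc a]; exact hy (r * x))
      (by intro x y hx r; rw [← mul_assoc]; exact Q.mul_mem_right _ _ (hx r))
    have hB : ∀ x, x ∈ B ↔ ∀ r, a * r * x ∈ Q := TwoSidedIdeal.mem_mk' _ _ _ _ _ _
    have hle : Q ⊔ TwoSidedIdeal.span {b} ≤ B := by
      refine sup_le (fun x hx => (hB x).2 fun r => Q.mul_mem_left _ _ hx) ?_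
      intro x hx
      refine TwoSidedIdeal.mem_span_iff.1 hx B ?_
      rintro _ rfl
      exact (hB _).2 hab
    exact fun y hy => (hB y).1 (hle hy)
  have hb2 : ∀ x ∈ Q ⊔ TwoSidedIdeal.span {a}, ∀ r, x * r * (c ^ k • u) ∈ Q := by
    let B : TwoSidedIdeal R := TwoSidedIdeal.mk' {x | ∀ r, x * r * (c ^ k • u) ∈ Q}
      (by intro r; simpa using Q.zero_mem)
      (by intro x y hx hy r; rw [add_mul, add_mul]; exact Q.add_mem (hx r) (hy r))
      (by intro x hx r; rw [neg_mul, neg_mul]; exact Q.neg_mem (hx r))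
      (by intro x y hy r; rw [mul_assoc x, mul_assoc x]; exact Q.mul_mem_left _ _ (hy r))
      (by intro x y hx r; rw [mul_assoc x]; exact hx (y * r))
    have hB : ∀ x, x ∈ B ↔ ∀ r, x * r * (c ^ k • u) ∈ Q := TwoSidedIdeal.mem_mk' _ _ _ _ _ _
    have hle : Q ⊔ TwoSidedIdeal.span {a} ≤ B := by
      refine sup_le (fun x hx => (hB x).2 fun r =>
        Q.mul_mem_right _ _ (Q.mul_mem_right _ _ hx)) ?_
      intro x hx
      refine TwoSidedIdeal.mem_span_iff.1 hx B ?_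
      rintro _ rfl
      exact (hB _).2 (hb1 _ hku)
    exact fun y hy => (hB y).1 (hle hy)
  rcases hP.2 t u (fun r => by
    refine hQT (n + k) _ ?_
    have := hb2 _ hnt r
    rwa [smul_mul_assoc, smul_mul_assoc, mul_smul_comm, smul_smul, ← pow_add] at this) with h | h
  · exact ht h
  · exact hu h

/-- The two-sided ideal `I R`. -/
noncomputable def extTS {C : Type*} (R : Type*) [CommRing C] [Ring R] [Algebra C R] (I : Ideal C) :
    TwoSidedIdeal R :=
  TwoSidedIdeal.mk' ((I • ⊤ : Submodule C R) : Set R)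
    (Submodule.zero_mem _) (Submodule.add_mem _) (Submodule.neg_mem _)
    (by
      intro x y hy
      have h : (I • ⊤ : Submodule C R) ≤ (I • ⊤ : Submodule C R).comap (LinearMap.mulLeft C x) :=
        Submodule.smul_le.2 fun r hr n _ => by
          simp only [Submodule.mem_comap, LinearMap.mulLeft_apply, mul_smul_comm]
          exact Submodule.smul_mem_smul hr trivial
      exact h hy)
    (by
      intro x y hx
      have h : (I • ⊤ : Submodule C R) ≤ (I • ⊤ : Submodule C R).comap (LinearMap.mulRight C y) :=
        Submodule.smul_le.2 fun r hr n _ => by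
          simp only [Submodule.mem_comap, LinearMap.mulRight_apply, smul_mul_assoc]
          exact Submodule.smul_mem_smul hr trivial
      exact h hx)

lemma mem_extTS {C R : Type*} [CommRing C] [Ring R] [Algebra C R] {I : Ideal C} {x : R} :
    x ∈ extTS R I ↔ x ∈ (I • ⊤ : Submodule C R) := TwoSidedIdeal.mem_mk' _ _ _ _ _ _ _

lemma extTS_le {C R : Type*} [CommRing C] [Ring R] [Algebra C R] {I : Ideal C}
    {P : TwoSidedIdeal R} (h : I ≤ contractTS P) : extTS R I ≤ P := by
  intro x hx
  rw [mem_extTS] at hx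
  induction hx using Submodule.smul_induction_on' with
  | smul r hr n _ =>
    rw [Algebra.smul_def]
    exact P.mul_mem_right _ _ (mem_contractTS.1 (h hr))
  | add x _ y _ hx hy => exact P.add_mem hx hy

lemma chain_exists {C R : Type*} [CommRing C] [Ring R] [Algebra C R] (rs : List C)
    (hrs : RingTheory.Sequence.IsWeaklyRegular R rs) (n : ℕ) :
    n ≤ rs.length → ∀ P : TwoSidedIdeal R, IsPrimeTS P → extTS R (Ideal.ofList (rs.take n)) ≤ P →
    ∃ f : Fin (n + 1) → TwoSidedIdeal R,
    StrictMono f ∧ (∀ i, IsPrimeTS (f i)) ∧ f (Fin.last n) = P := by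
  induction n with
  | zero =>
    intro _ P hP _
    exact ⟨fun _ => P, by intro i j hij; exact absurd hij (by omega), fun _ => hP, rfl⟩
  | succ n ih =>
    intro hn P hP hle
    have hlt : n < rs.length := hn
    have hmem : ∀ c ∈ rs.take (n + 1), algebraMap C R c ∈ P := by
      intro c hc
      refine hle (mem_extTS.2 ?_)
      rw [Algebra.algebraMap_eq_smul_one]
      exact Submodule.smul_mem_smul (Ideal.subset_span hc) trivial
    have hle' : extTS R (Ideal.ofList (rs.take n)) ≤ P := by
      refine extTS_le (Ideal.span_le.2 fun c hc => ?_)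
      refine mem_contractTS.2 (hmem c ?_)
      rw [List.take_succ_eq_append_getElem hlt]
      exact List.mem_append_left _ hc
    obtain ⟨Q, hQ, hIQ, hQP⟩ := exists_below hP hle' rs[n] (hmem _ (by
        rw [List.take_succ_eq_append_getElem hlt]
        exact List.mem_append_right _ (List.mem_singleton_self _))) (by
      intro r hr
      have hreg := hrs.regular_mod_prev n hlt
      rw [mem_extTS] at hr ⊢
      rw [← Submodule.Quotient.mk_eq_zero] at hr ⊢
      rw [Submodule.Quotient.mk_smul] at hr
      exact hreg (by simpa using hr))
    obtain ⟨f, hf, hfp, hfl⟩ := ih hlt.le Q hQ hIQ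
    refine ⟨Fin.snoc f P, ?_, ?_, by simp⟩
    · rw [Fin.strictMono_iff_lt_succ]
      intro i
      induction i using Fin.lastCases with
      | last => simpa [hfl] using hQP
      | cast i =>
        rw [← Fin.castSucc_succ]
        simp only [Fin.snoc_castSucc]
        exact hf (Fin.castSucc_lt_succ)
    · intro i
      induction i using Fin.lastCases with
      | last => simpa using hP
      | cast i => simpa using hfp i

lemma grade_le_height {C R : Type*} [CommRing C] [Ring R] [Algebra C R]
    {P : TwoSidedIdeal R} (hP : IsPrimeTS P) :
    cGrade (contractTS (C := C) P) R ≤ tsHeight P := by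
  refine sSup_le ?_
  rintro _ ⟨rs, rfl, hmem, hreg⟩
  refine le_sSup ⟨rs.length, rfl, chain_exists rs hreg.toIsWeaklyRegular _ le_rfl P hP ?_⟩
  rw [List.take_length]
  exact extTS_le (Ideal.span_le.2 hmem)

/-- Let `R` be a noetherian ring which is a finitely generated module over a central
subring `C`, and suppose `R` is a maximal Cohen-Macaulay `C`-module (`C`-Macaulay).
If `C` is equicodimensional, then `R` is equicodimensional: every maximal (two-sided)
ideal of `R` has height equal to `Kdim R`. -/
theorem equicodimensional_of_CMacaulay {C R : Type*} [CommRing C] [IsNoetherianRing C]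
    [Ring R] [Algebra C R] (hinj : Function.Injective (algebraMap C R))
    [Module.Finite C R]
    (hCM : IsMaximalCohenMacaulay C R)
    (hequi : ∀ m : Ideal C, m.IsMaximal → cHeight m = cKdim C) :
    ∀ M : TwoSidedIdeal R, IsMaximalTS M → tsHeight M = tsKdim R := by
  intro M hM
  have hMp := maximal_prime hM
  have hm : (contractTS (C := C) M).IsMaximal := contract_maximal hM
  refine le_antisymm (le_iSup (fun P : {P : TwoSidedIdeal R // IsPrimeTS P} => tsHeight P.1)
    ⟨M, hMp⟩) ?_
  refine le_trans ?_ (grade_le_height (C := C) hMp)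
  rw [hCM _ hm, hequi _ hm]
  refine iSup_le fun P => (height_le (C := C) P.1).trans ?_
  exact le_iSup (fun p : {p : Ideal C // p.IsPrime} => cHeight p.1)
    ⟨contractTS P.1, contract_prime P.2⟩
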